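/- Every T-chain can be obtained by starting with one of the chains [4] or [3,2,…,2,3] (with any number k ≥ 0 of intermediate 2's) and iterating finitely many times the two operations [b_1,…,b_ρ] ↦ [2, b_1,…,b_{ρ−1}, b_ρ + 1] and [b_1,…,b_ρ] ↦ [b_1 + 1, b_2,…,b_ρ, 2]. -/

import Mathlib

/-- Hirzebruch–Jung continued fraction: `hj [b] = b`, `hj (b :: l) = b - 1 / hj l`. -/
def hj : List ℚ → ℚ
  | [] => 0
  | b :: l => b - 1 / hj l

/-- `n/q` (with `n > q ≥ 1` coprime) is a T-fraction if `n ∣ (q+1)²` and `q ≠ n-1`. -/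
def IsTFraction (n q : ℕ) : Prop :=
  1 ≤ q ∧ q < n ∧ Nat.Coprime n q ∧ n ∣ (q + 1) ^ 2 ∧ q ≠ n - 1

/-- A sequence of integers `≥ 2` is a T-chain if its Hirzebruch–Jung value
equals `n/q` for some T-fraction `n/q`. -/
def IsTChain (L : List ℤ) : Prop :=
  (∀ b ∈ L, 2 ≤ b) ∧
  ∃ n q : ℕ, IsTFraction n q ∧ hj (L.map (fun b => (b : ℚ))) = (n : ℚ) / (q : ℚ)

/-- Chains obtainable from `[4]` or `[3,2,…,2,3]` (any number `k ≥ 0` of intermediate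
`2`'s) by iterating the operations `[b_1,…,b_ρ] ↦ [2, b_1,…,b_{ρ−1}, b_ρ + 1]` and
`[b_1,…,b_ρ] ↦ [b_1 + 1, b_2,…,b_ρ, 2]`. -/
inductive TChainGen : List ℤ → Prop
  | base4 : TChainGen [4]
  | base3 (k : ℕ) : TChainGen (3 :: (List.replicate k 2 ++ [3]))
  | stepL (L : List ℤ) : TChainGen L → TChainGen (2 :: (L.dropLast ++ [L.getLast! + 1]))
  | stepR (L : List ℤ) : TChainGen L → TChainGen ((L.head! + 1) :: (L.tail ++ [2]))

/-!
Write `M(b) = !![b, -1; 1, 0]`, so that `M(L) = M(b₁) ⋯ M(b_ρ) = !![N, -Q'; Q, -P]` with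
`[b₁, …, b_ρ] = N / Q`, `[b_ρ, …, b₁] = N / Q'` and `Q Q' - N P = 1`. If `N ∣ (Q + 1)²`, multiplying
by `Q' ≡ Q⁻¹` gives `N ∣ Q + Q' + 2`, and since `Q' < N` and `Q + 1 < N` this forces
`N = Q + Q' + 2`. The quantity `N - Q - Q'` is the trace of `M(L) M(1)`, i.e. of the cyclic word
`(b₁, …, b_ρ, 1)`, and the relation `M(c) M(1) M(a) = M(c - 1) M(a - 1)` (a blow-down of the entry
`1`) shows that both operations preserve it. It remains to analyse chains with trace `2`: the
operations can be undone until both ends are at least `3`, and then the trace is at least `2`, with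
equality only for `[3, 2, …, 2, 3]`.
-/

/-- The elementary matrix `M(b)` of Hirzebruch–Jung continued fractions: as a Möbius transformation
it sends `x` to `b - 1 / x`. -/
def hjStep (b : ℤ) : Matrix (Fin 2) (Fin 2) ℤ :=
  !![b, -1; 1, 0]

/-- The product `M(b₁) ⋯ M(b_ρ) = !![N, -Q'; Q, -P]` attached to a chain. -/
def hjMatrix (L : List ℤ) : Matrix (Fin 2) (Fin 2) ℤ :=
  (L.map hjStep).prod

/-- The numerator `N` of the continued fraction `[b₁, …, b_ρ] = N / Q`. -/
def hjNum (L : List ℤ) : ℤ :=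
  hjMatrix L 0 0

/-- The denominator `Q` of the continued fraction `[b₁, …, b_ρ] = N / Q`. -/
def hjDen (L : List ℤ) : ℤ :=
  hjMatrix L 1 0

/-- The denominator `Q'` of the reversed continued fraction `[b_ρ, …, b₁] = N / Q'`. -/
def hjRevDen (L : List ℤ) : ℤ :=
  -hjMatrix L 0 1

/-- The trace of `M(b₁) ⋯ M(b_ρ) M(1)`, the invariant of the two operations on chains. -/
def cyclicTrace (L : List ℤ) : ℤ :=
  (hjMatrix L * hjStep 1).trace

lemma hjMatrix_cons (b : ℤ) (L : List ℤ) : hjMatrix (b :: L) = hjStep b * hjMatrix L := by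
  simp only [hjMatrix, List.map_cons, List.prod_cons]

lemma hjMatrix_concat (L : List ℤ) (c : ℤ) : hjMatrix (L ++ [c]) = hjMatrix L * hjStep c := by
  simp only [hjMatrix, List.map_append, List.map_singleton, List.prod_append, List.prod_singleton]

lemma hjNum_nil : hjNum [] = 1 := rfl

lemma hjDen_nil : hjDen [] = 0 := rfl

lemma hjRevDen_nil : hjRevDen [] = 0 := rfl

lemma hjNum_cons (b : ℤ) (L : List ℤ) : hjNum (b :: L) = b * hjNum L - hjDen L := by
  simp [hjNum, hjDen, hjMatrix_cons, hjStep, Matrix.mul_apply, sub_eq_add_neg]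

lemma hjDen_cons (b : ℤ) (L : List ℤ) : hjDen (b :: L) = hjNum L := by
  simp [hjNum, hjDen, hjMatrix_cons, hjStep, Matrix.mul_apply]

lemma hjNum_concat (L : List ℤ) (c : ℤ) : hjNum (L ++ [c]) = c * hjNum L - hjRevDen L := by
  simp [hjNum, hjRevDen, hjMatrix_concat, hjStep, Matrix.mul_apply, mul_comm]

lemma hjRevDen_concat (L : List ℤ) (c : ℤ) : hjRevDen (L ++ [c]) = hjNum L := by
  simp [hjNum, hjRevDen, hjMatrix_concat, hjStep, Matrix.mul_apply]

lemma det_hjMatrix (L : List ℤ) : (hjMatrix L).det = 1 := by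
  induction L with
  | nil => exact Matrix.det_one
  | cons b L ih => rw [hjMatrix_cons, Matrix.det_mul, ih, hjStep, Matrix.det_fin_two_of]; ring

lemma hjDen_mul_hjRevDen (L : List ℤ) :
    hjDen L * hjRevDen L = 1 - hjNum L * hjMatrix L 1 1 := by
  have hdet := det_hjMatrix L
  rw [Matrix.det_fin_two] at hdet
  simp only [hjNum, hjDen, hjRevDen]
  linear_combination hdet

lemma isCoprime_hjNum_hjDen (L : List ℤ) : IsCoprime (hjNum L) (hjDen L) :=
  ⟨hjMatrix L 1 1, hjRevDen L, by linear_combination hjDen_mul_hjRevDen L⟩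

lemma add_one_le_mul_sub {a N Q : ℤ} (ha : 2 ≤ a) (hN : 0 ≤ N) (hQ : Q < N) :
    N + 1 ≤ a * N - Q := by
  nlinarith

lemma eq_two_of_mul_sub_eq_add_one {a N Q : ℤ} (ha : 2 ≤ a) (hN : 0 < N) (hQ : Q < N)
    (h : a * N - Q = N + 1) : a = 2 ∧ Q + 1 = N := by
  obtain rfl : a = 2 := le_antisymm (by nlinarith) ha
  exact ⟨rfl, by linarith⟩

lemma hjDen_nonneg_and_lt_hjNum {L : List ℤ} (hL : ∀ b ∈ L, 2 ≤ b) :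
    0 ≤ hjDen L ∧ hjDen L < hjNum L := by
  induction L with
  | nil => simp only [hjDen_nil, hjNum_nil, le_refl, zero_lt_one, and_self]
  | cons b L ih =>
    rw [List.forall_mem_cons] at hL
    obtain ⟨hDen, hlt⟩ := ih hL.2
    rw [hjDen_cons, hjNum_cons]
    exact ⟨by linarith, Int.add_one_le_iff.mp (add_one_le_mul_sub hL.1 (by linarith) hlt)⟩

lemma hjRevDen_nonneg_and_lt_hjNum {L : List ℤ} (hL : ∀ b ∈ L, 2 ≤ b) :
    0 ≤ hjRevDen L ∧ hjRevDen L < hjNum L := by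
  induction L using List.reverseRecOn with
  | nil => simp only [hjRevDen_nil, hjNum_nil, le_refl, zero_lt_one, and_self]
  | append_singleton L c ih =>
    rw [List.forall_mem_append, List.forall_mem_singleton] at hL
    obtain ⟨hDen, hlt⟩ := ih hL.1
    rw [hjRevDen_concat, hjNum_concat]
    exact ⟨by linarith, Int.add_one_le_iff.mp (add_one_le_mul_sub hL.2 (by linarith) hlt)⟩

lemma hjNum_pos {L : List ℤ} (hL : ∀ b ∈ L, 2 ≤ b) : 0 < hjNum L :=
  have ⟨hDen, hlt⟩ := hjDen_nonneg_and_lt_hjNum hL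
  hDen.trans_lt hlt

lemma eq_two_of_hjDen_add_one_eq_hjNum {L : List ℤ} (hL : ∀ b ∈ L, 2 ≤ b)
    (h : hjDen L + 1 = hjNum L) : ∀ b ∈ L, b = 2 := by
  induction L with
  | nil => exact List.forall_mem_nil _
  | cons b L ih =>
    rw [List.forall_mem_cons] at hL ⊢
    rw [hjDen_cons, hjNum_cons] at h
    obtain ⟨hb, hDen⟩ := eq_two_of_mul_sub_eq_add_one hL.1 (hjNum_pos hL.2)
      (hjDen_nonneg_and_lt_hjNum hL.2).2 h.symm
    exact ⟨hb, ih hL.2 hDen⟩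

lemma hj_map_intCast {L : List ℤ} (hL : ∀ b ∈ L, 2 ≤ b) :
    hj (L.map Int.cast) = (hjNum L : ℚ) / hjDen L := by
  induction L with
  | nil => simp only [List.map_nil, hj, hjDen_nil, Int.cast_zero, div_zero]
  | cons b L ih =>
    rw [List.forall_mem_cons] at hL
    have hNum : (hjNum L : ℚ) ≠ 0 := mod_cast (hjNum_pos hL.2).ne'
    rw [List.map_cons, hj, ih hL.2, hjNum_cons, hjDen_cons, one_div_div]
    push_cast
    field_simp

lemma hjStep_mul_one_mul (c a : ℤ) :
    hjStep c * hjStep 1 * hjStep a = hjStep (c - 1) * hjStep (a - 1) := by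
  simp only [hjStep, Matrix.mul_fin_two]
  congr! 3 <;> ring_nf

lemma cyclicTrace_eq (L : List ℤ) : cyclicTrace L = hjNum L - hjDen L - hjRevDen L := by
  rw [cyclicTrace, (hjMatrix L).eta_fin_two, hjStep, Matrix.mul_fin_two, Matrix.trace_fin_two_of,
    hjNum, hjDen, hjRevDen]
  ring

lemma cyclicTrace_nil : cyclicTrace [] = 1 := by
  rw [cyclicTrace_eq, hjNum_nil, hjDen_nil, hjRevDen_nil, sub_zero, sub_zero]

lemma cyclicTrace_singleton (a : ℤ) : cyclicTrace [a] = a - 2 := by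
  have hRevDen : hjRevDen [a] = 1 := hjRevDen_concat [] a
  rw [cyclicTrace_eq, hRevDen, hjNum_cons, hjDen_cons, hjNum_nil, hjDen_nil]
  ring

lemma cyclicTrace_cons_concat (a : ℤ) (m : List ℤ) (c : ℤ) :
    cyclicTrace (a :: (m ++ [c])) = (hjMatrix m * hjStep (c - 1) * hjStep (a - 1)).trace := by
  rw [cyclicTrace, hjMatrix_cons, hjMatrix_concat, mul_assoc, Matrix.trace_mul_comm,
    mul_assoc (hjMatrix m), mul_assoc (hjMatrix m), mul_assoc (hjMatrix m), hjStep_mul_one_mul]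

lemma cyclicTrace_two_cons_concat (m : List ℤ) (c : ℤ) :
    cyclicTrace (2 :: (m ++ [c])) = cyclicTrace (m ++ [c - 1]) := by
  rw [cyclicTrace_cons_concat, cyclicTrace, hjMatrix_concat]
  norm_num

lemma cyclicTrace_cons_concat_two (a : ℤ) (m : List ℤ) :
    cyclicTrace (a :: (m ++ [2])) = cyclicTrace ((a - 1) :: m) := by
  rw [cyclicTrace_cons_concat, cyclicTrace, hjMatrix_cons, Matrix.trace_mul_cycle]
  norm_num

lemma hjNum_mul_cyclicTrace_cons_concat (a : ℤ) (m : List ℤ) (c : ℤ) :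
    hjNum m * cyclicTrace (a :: (m ++ [c])) =
      ((a - 1) * hjNum m - hjDen m) * ((c - 1) * hjNum m - hjRevDen m) - hjNum m ^ 2 - 1 := by
  have hdet := det_hjMatrix m
  rw [Matrix.det_fin_two] at hdet
  rw [cyclicTrace_cons_concat, (hjMatrix m).eta_fin_two, hjStep, hjStep, Matrix.mul_fin_two,
    Matrix.mul_fin_two, Matrix.trace_fin_two_of, hjNum, hjDen, hjRevDen]
  linear_combination -hdet

lemma cyclicTrace_two_cons_concat_two_neg {m : List ℤ} (hm : ∀ b ∈ m, 2 ≤ b) :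
    cyclicTrace (2 :: (m ++ [2])) < 0 := by
  obtain ⟨hDen, hlt⟩ := hjDen_nonneg_and_lt_hjNum hm
  obtain ⟨hRevDen, hRevlt⟩ := hjRevDen_nonneg_and_lt_hjNum hm
  have htrace := hjNum_mul_cyclicTrace_cons_concat 2 m 2
  have hprod : (hjNum m - hjDen m) * (hjNum m - hjRevDen m) ≤ hjNum m * hjNum m :=
    mul_le_mul (by linarith) (by linarith) (by linarith) (by linarith)
  exact neg_of_mul_neg_right (by linarith) (hjNum_pos hm).le

lemma ends_eq_three_of_cyclicTrace_eq_two {a c : ℤ} {m : List ℤ} (ha : 3 ≤ a) (hc : 3 ≤ c)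
    (hm : ∀ b ∈ m, 2 ≤ b) (ht : cyclicTrace (a :: (m ++ [c])) = 2) :
    a = 3 ∧ c = 3 ∧ hjDen m + 1 = hjNum m := by
  have hNum := hjNum_pos hm
  have hDen := (hjDen_nonneg_and_lt_hjNum hm).2
  have hRevDen := (hjRevDen_nonneg_and_lt_hjNum hm).2
  have hprod : (hjNum m + 1) * (hjNum m + 1) =
      ((a - 1) * hjNum m - hjDen m) * ((c - 1) * hjNum m - hjRevDen m) := by
    have htrace := hjNum_mul_cyclicTrace_cons_concat a m c
    rw [ht] at htrace
    linear_combination htrace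
  have hleft := add_one_le_mul_sub (a := a - 1) (by linarith) hNum.le hDen
  have hright := add_one_le_mul_sub (a := c - 1) (by linarith) hNum.le hRevDen
  obtain ⟨hleft_eq, hright_eq⟩ :=
    (mul_eq_mul_iff_eq_and_eq_of_pos hleft hright (by linarith) (by linarith)).mp hprod
  obtain ⟨ha', hDen'⟩ := eq_two_of_mul_sub_eq_add_one (by linarith) hNum hDen hleft_eq.symm
  obtain ⟨hc', -⟩ := eq_two_of_mul_sub_eq_add_one (by linarith) hNum hRevDen hright_eq.symm
  exact ⟨by linarith, by linarith, hDen'⟩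

namespace TChainGen

lemma two_cons_concat {m : List ℤ} {c : ℤ} (h : TChainGen (m ++ [c - 1])) :
    TChainGen (2 :: (m ++ [c])) := by
  simpa [List.getLast!_eq_getLast?_getD] using stepL _ h

lemma cons_concat_two {a : ℤ} {m : List ℤ} (h : TChainGen ((a - 1) :: m)) :
    TChainGen (a :: (m ++ [2])) := by
  simpa using stepR _ h

lemma of_ends_ge_three {a c : ℤ} {m : List ℤ} (ha : 3 ≤ a) (hc : 3 ≤ c)
    (hm : ∀ b ∈ m, 2 ≤ b) (ht : cyclicTrace (a :: (m ++ [c])) = 2) :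
    TChainGen (a :: (m ++ [c])) := by
  obtain ⟨rfl, rfl, hDen⟩ := ends_eq_three_of_cyclicTrace_eq_two ha hc hm ht
  rw [List.eq_replicate_of_mem (eq_two_of_hjDen_add_one_eq_hjNum hm hDen)]
  exact base3 m.length

theorem of_cyclicTrace_eq_two {L : List ℤ} (hL : ∀ b ∈ L, 2 ≤ b) (ht : cyclicTrace L = 2) :
    TChainGen L := by
  induction hlen : L.length using Nat.strong_induction_on generalizing L with
  | _ k ih =>
  subst hlen
  rcases L with _ | ⟨a, L⟩
  · norm_num [cyclicTrace_nil] at ht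
  rcases L.eq_nil_or_concat with rfl | ⟨m, c, rfl⟩
  · rw [cyclicTrace_singleton] at ht
    obtain rfl : a = 4 := by linarith
    exact base4
  rw [List.concat_eq_append] at hL ht ih ⊢
  rw [List.forall_mem_cons, List.forall_mem_append, List.forall_mem_singleton] at hL
  obtain ⟨ha, hm, hc⟩ := hL
  rcases ha.eq_or_lt with rfl | ha
  · rcases hc.eq_or_lt with rfl | hc
    · linarith [cyclicTrace_two_cons_concat_two_neg hm]
    · rw [cyclicTrace_two_cons_concat] at ht
      refine two_cons_concat (ih _ (by simp) ?_ ht rfl)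
      exact List.forall_mem_append.mpr ⟨hm, List.forall_mem_singleton.mpr (by linarith)⟩
  · rcases hc.eq_or_lt with rfl | hc
    · rw [cyclicTrace_cons_concat_two] at ht
      exact cons_concat_two (ih _ (by simp) (List.forall_mem_cons.mpr ⟨by linarith, hm⟩) ht rfl)
    · exact of_ends_ge_three ha hc hm ht

end TChainGen

lemma hjNum_dvd_hjDen_add_hjRevDen_add_two {L : List ℤ} (h : hjNum L ∣ (hjDen L + 1) ^ 2) :
    hjNum L ∣ hjDen L + hjRevDen L + 2 := by
  have hinv : hjDen L + hjRevDen L + 2 = hjRevDen L * (hjDen L + 1) ^ 2 +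
      hjNum L * (hjMatrix L 1 1 * (hjDen L + 2)) := by
    linear_combination (-(hjDen L + 2)) * hjDen_mul_hjRevDen L
  rw [hinv]
  exact dvd_add (h.mul_left _) (dvd_mul_right _ _)

theorem cyclicTrace_eq_two_of_hjNum_dvd {L : List ℤ} (hL : ∀ b ∈ L, 2 ≤ b)
    (hdvd : hjNum L ∣ (hjDen L + 1) ^ 2) (hne : hjDen L + 1 ≠ hjNum L) : cyclicTrace L = 2 := by
  obtain ⟨hDen, hlt⟩ := hjDen_nonneg_and_lt_hjNum hL
  obtain ⟨hRevDen, hRevlt⟩ := hjRevDen_nonneg_and_lt_hjNum hL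
  obtain ⟨k, hk⟩ := hjNum_dvd_hjDen_add_hjRevDen_add_two hdvd
  have hNum := hjNum_pos hL
  have hk_pos : 0 < k := pos_of_mul_pos_right (by linarith) hNum.le
  have hk_lt : k < 2 := lt_of_mul_lt_mul_left (by omega) hNum.le
  obtain rfl : k = 1 := by omega
  rw [cyclicTrace_eq]
  linarith

theorem IsTFraction.hjNum_eq_and_hjDen_eq {L : List ℤ} {n q : ℕ} (h : IsTFraction n q)
    (hL : ∀ b ∈ L, 2 ≤ b) (hval : hj (L.map Int.cast) = (n : ℚ) / q) :
    hjNum L = n ∧ hjDen L = q := by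
  obtain ⟨hq, hqn, hcop, -⟩ := h
  rw [hj_map_intCast hL] at hval
  have hDen_ne : hjDen L ≠ 0 := by
    intro hzero
    rw [hzero, Int.cast_zero, div_zero, eq_comm, div_eq_zero_iff] at hval
    norm_cast at hval
    omega
  exact Rat.div_int_inj ((hjDen_nonneg_and_lt_hjNum hL).1.lt_of_ne' hDen_ne) (mod_cast hq)
    (Int.isCoprime_iff_gcd_eq_one.mp (isCoprime_hjNum_hjDen L)) hcop (by push_cast; exact hval)

/-- Every T-chain is obtained from `[4]` or some `[3,2,…,2,3]` by iterating the
two elementary operations. -/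
theorem tchain_generated (L : List ℤ) (h : IsTChain L) : TChainGen L := by
  obtain ⟨hL, n, q, hnq, hval⟩ := h
  -- The coercion in `IsTChain` elaborates to a `List`-monadic lift of `L`, not to `L.map Int.cast`.
  have hval' : hj (L.map Int.cast) = (n : ℚ) / q := by
    simpa [List.map_eq_flatMap] using hval
  obtain ⟨hNum, hDen⟩ := hnq.hjNum_eq_and_hjDen_eq hL hval'
  obtain ⟨-, -, -, hdvd, hne⟩ := hnq
  refine TChainGen.of_cyclicTrace_eq_two hL (cyclicTrace_eq_two_of_hjNum_dvd hL ?_ ?_)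
  · rw [hNum, hDen]
    exact_mod_cast hdvd
  · rw [hNum, hDen]
    exact_mod_cast fun h => hne (Nat.eq_sub_of_add_eq h)
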